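/- Let A be an abelian category with enough projective objects or enough injective objects, and let D be the standard t-structure on the unbounded derived category D(A). Then gl.dim(A) = gl.dim(D). -/

import Mathlib

open CategoryTheory Limits

namespace TStructurePaper

universe w v u

variable (A : Type u) [Category.{v} A] [Abelian A] [HasDerivedCategory.{w} A]

/-- `X ∈ D(A)_{≤n}`: the cohomology of the complex `X` vanishes in degrees `> n`. -/
def DLE (n : ℤ) (X : DerivedCategory A) : Prop :=
  ∀ i : ℤ, n < i → IsZero ((DerivedCategory.homologyFunctor A i).obj X)

/-- `X ∈ D(A)_{≥n}`: the cohomology of the complex `X` vanishes in degrees `< n`. -/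
def DGE (n : ℤ) (X : DerivedCategory A) : Prop :=
  ∀ i : ℤ, i < n → IsZero ((DerivedCategory.homologyFunctor A i).obj X)

/-- Membership of the subcategory `D_ℕ` of complexes with only finitely many nonzero
cohomology objects. -/
def InDb (X : DerivedCategory A) : Prop :=
  {i : ℤ | ¬ IsZero ((DerivedCategory.homologyFunctor A i).obj X)}.Finite

/-- The global dimension of the standard t-structure `D` on `D(A)`: the smallest `d` such
that `Hom(D_{≥0}, D_{≤-(d+1)}) = 0`. -/
noncomputable def glDimD : ℕ∞ :=
  sInf {e : ℕ∞ | ∃ d : ℕ, e = d ∧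
    ∀ (X Y : DerivedCategory A), DGE A 0 X → DLE A (-(d + 1)) Y → ∀ f : X ⟶ Y, f = 0}

/-- The global dimension of the restricted bounded t-structure `D^b` on the full
subcategory `D_ℕ` (whose Hom-groups are those of `D(A)`). -/
noncomputable def glDimDb : ℕ∞ :=
  sInf {e : ℕ∞ | ∃ d : ℕ, e = d ∧
    ∀ (X Y : DerivedCategory A), InDb A X → InDb A Y →
      DGE A 0 X → DLE A (-(d + 1)) Y → ∀ f : X ⟶ Y, f = 0}

/-- The global dimension of the abelian category `A`: the supremum of the set of `d ≥ 0`
such that `Ext^d_A(M, N) ≠ 0` for some objects `M`, `N`. -/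
noncomputable def glDimAb [HasExt.{w} A] : ℕ∞ :=
  sSup {e : ℕ∞ | ∃ d : ℕ, e = d ∧ ∃ (M N : A) (α : Abelian.Ext.{w} M N d), α ≠ 0}

/-!
A morphism in `D(A)` from `X ∈ D(A)_{≥n}` to `Y ∈ D(A)_{≤n}` is a fraction `X ≅ K ⟶ L ≅ Y`
with `L` a complex which is zero in degrees `> n`, so it factors through the stupid truncation of
`K` in degrees `≤ n`. The latter has the same cohomology as `K` in degrees `< n`, hence it is
concentrated in degree `n`. Applying this twice, a morphism from `D(A)_{≥0}` to `D(A)_{≤-d}`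
factors through some `M ⟶ Σᵈ N` with `M, N ∈ A`, that is, through an element of `Extᵈ(M, N)`.
-/

section StupidTruncation

open HomologicalComplex ComplexShape.Embedding

variable {ι ι' : Type*} {c : ComplexShape ι} {c' : ComplexShape ι'}
  {C : Type*} [Category* C] [HasZeroMorphisms C] [HasZeroObject C]

section

variable (K : HomologicalComplex C c') {L : HomologicalComplex C c'} (φ : K ⟶ L)
  (e : c.Embedding c') [e.IsTruncLE]

/-- The projection of a complex onto its stupid truncation. As `e.IsTruncLE`, the terms which are
killed form a subcomplex. -/
noncomputable def πStupidTrunc : K ⟶ K.stupidTrunc e :=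
  e.liftExtend (𝟙 (K.restriction e)) fun _ hj ↦ hj.false_of_isTruncLE.elim

lemma homRestrict_πStupidTrunc : e.homRestrict (πStupidTrunc K e) = 𝟙 _ :=
  e.homRestrict_liftExtend _ _

lemma isIso_πStupidTrunc_f {i' : ι'} (hi' : i' ∈ Set.range e.f) :
    IsIso ((πStupidTrunc K e).f i') := by
  obtain ⟨i, hi⟩ := hi'
  exact (e.isIso_liftExtend_f_iff _ _ hi).2 inferInstance

instance isIso_πStupidTrunc [K.IsStrictlySupported e] : IsIso (πStupidTrunc K e) := by
  suffices ∀ i', IsIso ((πStupidTrunc K e).f i') from Hom.isIso_of_components _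
  intro i'
  by_cases hi' : i' ∈ Set.range e.f
  · exact isIso_πStupidTrunc_f K e hi'
  · have hne : ∀ i, e.f i ≠ i' := fun i hi ↦ hi' ⟨i, hi⟩
    exact (K.isZero_X_of_isStrictlySupported e i' hne).isIso
      (K.isZero_stupidTrunc_X e i' hne) _

variable {K} in
lemma πStupidTrunc_naturality :
    πStupidTrunc K e ≫ stupidTruncMap φ e = φ ≫ πStupidTrunc L e := by
  let φ' : K.restriction e ⟶ L.restriction e := restrictionMap φ e
  have restrict_left : e.homRestrict (πStupidTrunc K e ≫ extendMap φ' e) = φ' :=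
    (e.homRestrict_comp_extendMap _ φ').trans (by
      rw [homRestrict_πStupidTrunc, Category.id_comp])
  have restrict_right : e.homRestrict (φ ≫ πStupidTrunc L e) = φ' :=
    (e.homRestrict_precomp φ _).trans (by rw [homRestrict_πStupidTrunc, Category.comp_id])
  exact (e.homEquiv _ _).injective (Subtype.ext (restrict_left.trans restrict_right.symm))

variable {K} in
lemma exists_πStupidTrunc_comp_eq [L.IsStrictlySupported e] :
    ∃ ψ : K.stupidTrunc e ⟶ L, πStupidTrunc K e ≫ ψ = φ :=
  ⟨stupidTruncMap φ e ≫ inv (πStupidTrunc L e), by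
    rw [← Category.assoc, πStupidTrunc_naturality, Category.assoc, IsIso.hom_inv_id,
      Category.comp_id]⟩

lemma quasiIsoAt_πStupidTrunc {i' : ι'} [K.HasHomology i'] [(K.stupidTrunc e).HasHomology i']
    (hi' : c'.next i' ∈ Set.range e.f) : QuasiIsoAt (πStupidTrunc K e) i' := by
  have mem_of_rel {j' k' : ι'} (hjk : c'.Rel j' k') (hk' : k' ∈ Set.range e.f) :
      j' ∈ Set.range e.f := by
    obtain ⟨k, rfl⟩ := hk'
    exact e.mem_prev hjk
  have mem_self : i' ∈ Set.range e.f := by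
    by_cases h : c'.Rel i' (c'.next i')
    · exact mem_of_rel h hi'
    · rwa [c'.next_eq_self i' h] at hi'
  have mem_prev : c'.prev i' ∈ Set.range e.f := by
    by_cases h : c'.Rel (c'.prev i') i'
    · exact mem_of_rel h mem_self
    · rwa [c'.prev_eq_self i' h]
  let π : K.sc i' ⟶ (K.stupidTrunc e).sc i' :=
    (shortComplexFunctor C c' i').map (πStupidTrunc K e)
  have : IsIso π.τ₁ := isIso_πStupidTrunc_f K e mem_prev
  have : IsIso π.τ₂ := isIso_πStupidTrunc_f K e mem_self
  have : IsIso π.τ₃ := isIso_πStupidTrunc_f K e hi'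
  exact (quasiIsoAt_iff _ _).2 (ShortComplex.quasiIso_of_epi_of_isIso_of_mono π)

end

lemma isGE_stupidTrunc_embeddingUpIntLE [CategoryWithHomology C] (K : CochainComplex C ℤ) (n : ℤ)
    [K.IsGE n] : CochainComplex.IsGE (K.stupidTrunc (ComplexShape.embeddingUpIntLE n)) n := by
  rw [CochainComplex.isGE_iff]
  intro i hi
  have : QuasiIsoAt (πStupidTrunc K (ComplexShape.embeddingUpIntLE n)) i := by
    refine quasiIsoAt_πStupidTrunc K _ ⟨(n - (i + 1)).toNat, ?_⟩
    simp only [CochainComplex.next, ComplexShape.embeddingUpIntLE_f]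
    lia
  exact (exactAt_iff_of_quasiIsoAt (πStupidTrunc K _) i).1 (K.exactAt_of_isGE n i hi)

end StupidTruncation

section DerivedCategory

open DerivedCategory

variable {A}

lemma exists_fac_singleFunctor_of_isGE_of_isLE {X Y : DerivedCategory A} (n : ℤ)
    [X.IsGE n] [Y.IsLE n] (f : X ⟶ Y) :
    ∃ (M : A) (a : X ⟶ (singleFunctor A n).obj M) (b : (singleFunctor A n).obj M ⟶ Y),
      a ≫ b = f := by
  obtain ⟨L, _, ⟨eY⟩⟩ := Y.exists_iso_Q_obj_of_isLE n
  obtain ⟨K, s, _, g, hg⟩ := right_fac ((Q.objObjPreimageIso X).hom ≫ f ≫ eY.hom)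
  let eX : Q.obj K ≅ X := asIso (Q.map s) ≪≫ Q.objObjPreimageIso X
  have fac : f = eX.inv ≫ Q.map g ≫ eY.inv := by
    simp [eX, ← reassoc_of% hg]
  have : K.IsGE n := (isGE_Q_obj_iff K n).1 (TStructure.t.isGE_of_iso eX.symm n)
  let E : CochainComplex A ℤ := K.stupidTrunc (ComplexShape.embeddingUpIntLE n)
  let p : K ⟶ E := πStupidTrunc K _
  obtain ⟨q, hq : p ≫ q = g⟩ := exists_πStupidTrunc_comp_eq g (ComplexShape.embeddingUpIntLE n)
  have : E.IsGE n := isGE_stupidTrunc_embeddingUpIntLE K n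
  obtain ⟨M, ⟨eM⟩⟩ := (Q.obj E).exists_iso_singleFunctor_obj_of_isGE_of_isLE n
  refine ⟨M, eX.inv ≫ Q.map p ≫ eM.hom, eM.inv ≫ Q.map q ≫ eY.inv, ?_⟩
  simp [fac, ← hq]

/-- `Extⁿ(M, N)` as the morphisms from `M` in degree `0` to `N` in degree `-n`, rather than to a
shift of `N` in degree `0` as in `Abelian.Ext.homEquiv`. -/
noncomputable def extEquivSingleFunctorHom [HasExt.{w} A] (M N : A) (n : ℕ) :
    Abelian.Ext.{w} M N n ≃ ((singleFunctor A 0).obj M ⟶ (singleFunctor A (-n)).obj N) :=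
  Abelian.Ext.homEquiv.trans
    (((singleFunctors A).shiftIso (n : ℤ) (-n) 0 (by simp)).app N).homToEquiv

lemma hom_eq_zero_of_subsingleton_ext [HasExt.{w} A] (d : ℕ)
    (hd : ∀ M N : A, Subsingleton (Abelian.Ext.{w} M N d))
    {X Y : DerivedCategory A} [X.IsGE 0] [Y.IsLE (-d)] (f : X ⟶ Y) : f = 0 := by
  have : Y.IsLE 0 := TStructure.t.isLE_of_le Y (-d) 0
  obtain ⟨M, a, g, rfl⟩ := exists_fac_singleFunctor_of_isGE_of_isLE 0 f
  have : ((singleFunctor A 0).obj M).IsGE (-d) := TStructure.t.isGE_of_ge _ (-d) 0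
  obtain ⟨N, α, b, rfl⟩ := exists_fac_singleFunctor_of_isGE_of_isLE (-d) g
  have hα : α = 0 := (extEquivSingleFunctorHom M N d).symm.subsingleton.elim _ _
  simp [hα]

end DerivedCategory

section GlobalDimension

lemma glDimAb_le_natCast_iff {C : Type u} [Category.{v} C] [Abelian C] [HasExt.{w} C] (d : ℕ) :
    glDimAb C ≤ d ↔ ∀ M : C, HasProjectiveDimensionLE M d := by
  simp only [glDimAb, sSup_le_iff, hasProjectiveDimensionLT_iff.{w}]
  constructor
  · intro h M i hi N α
    by_contra hα
    have : i ≤ d := by exact_mod_cast h i ⟨i, rfl, M, N, α, hα⟩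
    lia
  · rintro h _ ⟨i, rfl, M, N, α, hα⟩
    by_contra! hi
    exact hα (h M i (by exact_mod_cast hi) α)

variable {A}

lemma glDimD_le_natCast_iff_hom_eq_zero (d : ℕ) :
    glDimD A ≤ d ↔ ∀ (X Y : DerivedCategory A) [X.IsGE 0] [Y.IsLE (-(d + 1))] (f : X ⟶ Y),
      f = 0 := by
  constructor
  · intro h X Y _ _ f
    obtain ⟨_, ⟨i, rfl, hi⟩, hid⟩ := sInf_lt_iff.1
      (h.trans_lt (ENat.natCast_lt_natCast.2 d.lt_succ_self))
    have : Y.IsLE (-(i + 1)) := DerivedCategory.TStructure.t.isLE_of_le Y (-(d + 1)) _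
      (by have := ENat.natCast_lt_natCast.1 hid; lia)
    exact hi X Y ((X.isGE_iff 0).1 inferInstance) ((Y.isLE_iff _).1 inferInstance) f
  · intro h
    refine sInf_le ⟨d, rfl, fun X Y hX hY f ↦ ?_⟩
    have : X.IsGE 0 := (X.isGE_iff 0).2 hX
    have : Y.IsLE (-(d + 1)) := (Y.isLE_iff _).2 hY
    exact h X Y f

lemma glDimD_le_natCast_iff_hasProjectiveDimensionLE (d : ℕ) :
    glDimD A ≤ d ↔ ∀ M : A, HasProjectiveDimensionLE M d := by
  have : HasExt.{w} A := hasExt_of_hasDerivedCategory A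
  rw [glDimD_le_natCast_iff_hom_eq_zero]
  constructor
  · intro h M
    refine HasProjectiveDimensionLT.mk.{w} fun i hi N α ↦ ?_
    have : ((DerivedCategory.singleFunctor A (-i)).obj N).IsLE (-(d + 1)) :=
      DerivedCategory.TStructure.t.isLE_of_le _ (-i) _
    exact (extEquivSingleFunctorHom M N i).injective ((h _ _ _).trans (h _ _ _).symm)
  · intro h X Y _ _ f
    have : Y.IsLE (-(d + 1 : ℕ)) := by assumption_mod_cast
    have ext_vanishes (M N : A) : Subsingleton (Abelian.Ext.{w} M N (d + 1)) :=
      HasProjectiveDimensionLT.subsingleton M (d + 1) (d + 1) le_rfl N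
    exact hom_eq_zero_of_subsingleton_ext (d + 1) ext_vanishes f

end GlobalDimension

theorem statement9_general [HasExt.{w} A] : glDimAb A = glDimD A :=
  WithTop.eq_of_forall_le_coe_iff fun d ↦
    (glDimAb_le_natCast_iff d).trans (glDimD_le_natCast_iff_hasProjectiveDimensionLE d).symm

/-- If the abelian category `A` has enough projective objects or enough
injective objects, then `gl.dim(A) = gl.dim(D)` for the standard t-structure `D` on `D(A)`. -/
theorem statement9 [HasExt.{w} A]
    (h : EnoughProjectives A ∨ EnoughInjectives A) :
    glDimAb A = glDimD A := by
  exact statement9_general A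

end TStructurePaper
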